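/- arXiv:1711.08936 — 4 statements merged into one kernel-verified Lean document; each statement's English description precedes it below -/
import Mathlib

section
/- Let h : ℝ^p × ℝ → ℝ be continuous, strictly positive on a compact product set K × [a,b] with K ⊂ ℝ^p compact, and zero outside K × [a,b], and suppose ∫ h(z,t) dt > 0 for every z ∈ K. Define the conditional cumulative distribution F(x | z) = (∫_{-∞}^{x} h(z,t) dt) / (∫_{ℝ} h(z,t) dt) for z ∈ K. Then (z,x) ↦ F(x|z) is jointly continuous on K × [a,b], for each fixed z ∈ K the map x ↦ F(x|z) is strictly increasing from [a,b] onto [0,1], and the conditional quantile function Q : K × [0,1] → [a,b] defined by Q(z,u) = (F(·|z))^{-1}(u) is jointly continuous on K × [0,1]. -/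
open MeasureTheory Set

/-- regularity of the conditional CDF.  For a function `h` on `ℝ^p × ℝ` that is
continuous and strictly positive on a compact product `K × [a,b]`, zero outside, and with
positive marginal integral `∫ h(z,t) dt` on `K`, the conditional CDF
`F(x|z) = (∫_{-∞}^x h(z,t) dt) / (∫ h(z,t) dt)` is jointly continuous on `K × [a,b]`,
strictly increasing in `x` from `[a,b]` onto `[0,1]` for each `z ∈ K`, and the conditional
quantile `Q(z,·) = F(·|z)⁻¹` is jointly continuous on `K × [0,1]`. -/
theorem stmt1 (p : ℕ) (a b : ℝ) (hab : a < b)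
    (K : Set (EuclideanSpace ℝ (Fin p))) (hK : IsCompact K)
    (h : EuclideanSpace ℝ (Fin p) → ℝ → ℝ)
    (hcont : ContinuousOn (fun q : EuclideanSpace ℝ (Fin p) × ℝ => h q.1 q.2) (K ×ˢ Icc a b))
    (hpos : ∀ z ∈ K, ∀ t ∈ Icc a b, 0 < h z t)
    (hzero : ∀ (z : EuclideanSpace ℝ (Fin p)) (t : ℝ), (z, t) ∉ K ×ˢ Icc a b → h z t = 0)
    (hint : ∀ z ∈ K, 0 < ∫ t, h z t) :
    ContinuousOn
      (fun q : EuclideanSpace ℝ (Fin p) × ℝ => (∫ t in Iic q.2, h q.1 t) / ∫ t, h q.1 t)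
      (K ×ˢ Icc a b) ∧
    (∀ z ∈ K,
      StrictMonoOn (fun x => (∫ t in Iic x, h z t) / ∫ t, h z t) (Icc a b) ∧
      BijOn (fun x => (∫ t in Iic x, h z t) / ∫ t, h z t) (Icc a b) (Icc 0 1)) ∧
    ∃ Q : EuclideanSpace ℝ (Fin p) → ℝ → ℝ,
      ContinuousOn (fun q : EuclideanSpace ℝ (Fin p) × ℝ => Q q.1 q.2) (K ×ˢ Icc 0 1) ∧
      (∀ z ∈ K, MapsTo (Q z) (Icc 0 1) (Icc a b)) ∧
      (∀ z ∈ K, ∀ x ∈ Icc a b, Q z ((∫ t in Iic x, h z t) / ∫ t, h z t) = x) ∧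
      (∀ z ∈ K, ∀ u ∈ Icc (0:ℝ) 1, (∫ t in Iic (Q z u), h z t) / (∫ t, h z t) = u) := by
  classical
  let g : K → ℝ → ℝ := fun z t => h z (projIcc a b hab.le t)
  have hg : Continuous (Function.uncurry g) := by
    have := hcont.comp_continuous (f := fun q : K × ℝ => ((q.1 : EuclideanSpace ℝ (Fin p)),
      (projIcc a b hab.le q.2 : ℝ))) (by fun_prop) (fun q => ⟨q.1.2, (projIcc a b hab.le q.2).2⟩)
    exact this
  have hgz : ∀ z, Continuous (g z) := fun z => hg.comp (by fun_prop : Continuous fun t => (z, t))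
  have hgpos : ∀ z t, 0 < g z t := fun z t => hpos z z.2 _ (projIcc a b hab.le t).2
  let G : K → ℝ → ℝ := fun z x => ∫ t in a..x, g z t
  have hG : Continuous (fun q : K × ℝ => G q.1 q.2) :=
    intervalIntegral.continuous_parametric_intervalIntegral_of_continuous
      (f := fun q : K × ℝ => g q.1) (s := fun q => q.2) (a₀ := a)
      (by
        have := hg.comp (by fun_prop : Continuous fun r : (K × ℝ) × ℝ => (r.1.1, r.2))
        exact this) continuous_snd
  have hGmono : ∀ z, StrictMono (G z) := by
    intro z x y hxy
    have h1 : 0 < ∫ t in x..y, g z t := intervalIntegral.intervalIntegral_pos_of_pos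
      ((hgz z).intervalIntegrable _ _) (hgpos z) hxy
    have h2 := intervalIntegral.integral_add_adjacent_intervals
      ((hgz z).intervalIntegrable (μ := volume) a x) ((hgz z).intervalIntegrable x y)
    change (∫ t in a..x, g z t) < ∫ t in a..y, g z t
    linarith
  have hGa : ∀ z, G z a = 0 := fun z => intervalIntegral.integral_same
  have hGb : ∀ z, 0 < G z b := fun z => hGa z ▸ hGmono z hab
  have hIcc : ∀ z : K, ∀ x ∈ Icc a b, ∫ t in Icc a x, h z t = G z x := by
    intro z x hx
    rw [integral_Icc_eq_integral_Ioc]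
    change _ = ∫ t in a..x, g z t
    rw [intervalIntegral.integral_of_le hx.1]
    refine setIntegral_congr_fun measurableSet_Ioc fun t ht => ?_
    change h z t = h z (projIcc a b hab.le t)
    rw [projIcc_of_mem hab.le ⟨ht.1.le, ht.2.trans hx.2⟩]
  have hI : ∀ z : K, ∀ x ∈ Icc a b, ∫ t in Iic x, h z t = G z x := by
    intro z x hx
    rw [← hIcc z x hx]
    refine setIntegral_eq_of_subset_of_forall_diff_eq_zero measurableSet_Iic
      (fun t ht => ht.2) fun t ht => hzero _ _ fun hm => ht.2 ⟨hm.2.1, ht.1⟩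
  have hT : ∀ z : K, ∫ t, h z t = G z b := by
    intro z
    rw [← hIcc z b ⟨hab.le, le_rfl⟩]
    exact (setIntegral_eq_integral_of_forall_compl_eq_zero
      fun t ht => hzero _ _ fun hm => ht hm.2).symm
  let F : K → ℝ → ℝ := fun z x => G z x / G z b
  have hF : Continuous (fun q : K × ℝ => F q.1 q.2) :=
    hG.div (hG.comp (by fun_prop : Continuous fun q : K × ℝ => (q.1, b)))
      (fun q => (hGb q.1).ne')
  have hFmono : ∀ z, StrictMono (F z) := fun z x y hxy =>
    div_lt_div_of_pos_right (hGmono z hxy) (hGb z)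
  have hFa : ∀ z, F z a = 0 := fun z => by simp only [F, hGa, zero_div]
  have hFb : ∀ z, F z b = 1 := fun z => div_self (hGb z).ne'
  have hFeq : ∀ z : K, ∀ x ∈ Icc a b, (∫ t in Iic x, h z t) / ∫ t, h z t = F z x := by
    intro z x hx
    rw [hI z x hx, hT z]
  have hFz : ∀ z, Continuous (F z) := fun z => hF.comp (by fun_prop : Continuous fun t => (z, t))
  have hmaps : ∀ z, MapsTo (F z) (Icc a b) (Icc 0 1) := fun z x hx =>
    ⟨hFa z ▸ (hFmono z).monotone hx.1, hFb z ▸ (hFmono z).monotone hx.2⟩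
  have hbij : ∀ z, BijOn (F z) (Icc a b) (Icc 0 1) := by
    intro z
    refine ⟨hmaps z, (hFmono z).injective.injOn, ?_⟩
    have := intermediate_value_Icc hab.le (hFz z).continuousOn
    rwa [hFa, hFb] at this
  refine ⟨?_, ?_, ?_⟩
  · rw [continuousOn_iff_continuous_restrict]
    have := hF.comp (by fun_prop : Continuous fun q : ↥(K ×ˢ Icc a b) =>
      ((⟨q.1.1, q.2.1⟩ : K), q.1.2))
    refine this.congr fun q => ?_
    exact (hFeq ⟨q.1.1, q.2.1⟩ q.1.2 q.2.2).symm
  · intro z hz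
    have he : EqOn (F ⟨z, hz⟩) (fun x => (∫ t in Iic x, h z t) / ∫ t, h z t) (Icc a b) :=
      fun x hx => (hFeq ⟨z, hz⟩ x hx).symm
    exact ⟨((hFmono ⟨z, hz⟩).strictMonoOn _).congr he, (hbij ⟨z, hz⟩).congr he⟩
  · haveI : CompactSpace K := isCompact_iff_compactSpace.mp hK
    let Φ : K × Icc a b → K × Icc (0:ℝ) 1 := fun q => (q.1, ⟨F q.1 q.2, hmaps q.1 q.2.2⟩)
    have hΦ : Continuous Φ := by
      refine continuous_fst.prodMk (Continuous.subtype_mk ?_ _)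
      exact hF.comp (by fun_prop : Continuous fun q : K × Icc a b => (q.1, (q.2 : ℝ)))
    have hΦb : Function.Bijective Φ := by
      constructor
      · rintro ⟨z, x⟩ ⟨w, y⟩ hq
        simp only [Φ, Prod.mk.injEq, Subtype.mk.injEq] at hq
        obtain ⟨rfl, h2⟩ := hq
        exact Prod.ext rfl (Subtype.ext ((hFmono z).injective h2))
      · rintro ⟨z, u⟩
        obtain ⟨x, hx, hxu⟩ := (hbij z).surjOn u.2
        exact ⟨(z, ⟨x, hx⟩), Prod.ext rfl (Subtype.ext hxu)⟩
    let e : K × Icc a b ≃ K × Icc (0:ℝ) 1 := Equiv.ofBijective Φ hΦb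
    have he : Continuous e.symm := (Continuous.homeoOfEquivCompactToT2 (f := e) hΦ).continuous_symm
    have hes : ∀ q, Φ (e.symm q) = q := e.apply_symm_apply
    have hse : ∀ q, e.symm (Φ q) = q := e.symm_apply_apply
    let Q : EuclideanSpace ℝ (Fin p) → ℝ → ℝ := fun z u =>
      if hz : z ∈ K then ((e.symm (⟨z, hz⟩, projIcc 0 1 zero_le_one u)).2 : ℝ) else 0
    have hQ : ∀ z (hz : z ∈ K) u, Q z u =
        ((e.symm (⟨z, hz⟩, projIcc 0 1 zero_le_one u)).2 : ℝ) := fun z hz u => dif_pos hz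
    refine ⟨Q, ?_, ?_, ?_, ?_⟩
    · rw [continuousOn_iff_continuous_restrict]
      have h1 : Continuous fun q : ↥(K ×ˢ Icc (0:ℝ) 1) =>
        ((⟨q.1.1, q.2.1⟩ : K), projIcc (0:ℝ) 1 zero_le_one q.1.2) := by fun_prop
      refine (continuous_subtype_val.comp (continuous_snd.comp (he.comp h1))).congr fun q => ?_
      exact (hQ q.1.1 q.2.1 q.1.2).symm
    · intro z hz u _
      rw [hQ z hz]
      exact Subtype.property _
    · intro z hz x hx
      rw [hFeq ⟨z, hz⟩ x hx, hQ z hz, projIcc_of_mem zero_le_one (hmaps ⟨z, hz⟩ hx)]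
      exact congrArg (fun q : K × Icc a b => (q.2 : ℝ)) (hse (⟨z, hz⟩, ⟨x, hx⟩))
    · intro z hz u hu
      rw [hQ z hz, hFeq ⟨z, hz⟩ _ (Subtype.property _), projIcc_of_mem zero_le_one hu]
      have h1 := hes (⟨z, hz⟩, ⟨u, hu⟩)
      have h2 : (e.symm (⟨z, hz⟩, ⟨u, hu⟩)).1 = ⟨z, hz⟩ := congrArg Prod.fst h1
      have h3 := congrArg (fun q : K × Icc (0:ℝ) 1 => (q.2 : ℝ)) h1
      simp only [Φ, h2] at h3
      exact h3
end

section
/- Let X = (X_1, …, X_d) have joint probability distribution P on ℝ^d whose density h is continuous, strictly positive on a product of compact intervals K = [a_1,b_1] × ⋯ × [a_d,b_d], and zero elsewhere. Let G be a directed acyclic graph on {1,…,d} with parent sets Pa(i) ⊆ {1,…,i−1} (indices taken in a topological order of G), and suppose h factorizes along G: h(x) = ∏_{i=1}^{d} g_i(x_{Pa(i)}, x_i), where each g_i is continuous and for every fixed value z of x_{Pa(i)} in the relevant compact, t ↦ g_i(z,t) is a probability density. Then there exist continuous functions f_i : ℝ^{|Pa(i)|} × [0,1] → ℝ (f_1-type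 root functions being f_i : [0,1] → ℝ when Pa(i) = ∅) such that, defining G_f : [0,1]^d → ℝ^d recursively in topological order by G_f(e)_i = f_i((G_f(e)_j)_{j ∈ Pa(i)}, e_i), the pushforward of the uniform probability measure on [0,1]^d under G_f equals P. -/
open MeasureTheory Set

lemma oneD {X : Type*} [TopologicalSpace X] [FirstCountableTopology X] (γ : X → ℝ → ℝ)
    (hc : Continuous fun q : X × ℝ => γ q.1 q.2) (hp : ∀ x t, 0 < γ x t) (a b : ℝ) (hab : a < b) :
    ∃ f : X → ℝ → ℝ, (Continuous fun q : X × ℝ => f q.1 q.2) ∧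
      (∀ x y, γ x = γ y → f x = f y) ∧
      ∀ x, ∀ φ : ℝ → ENNReal, ∫⁻ e in Icc (0:ℝ) 1, φ (f x e) =
        ∫⁻ t in Icc a b, ENNReal.ofReal (γ x t / ∫ s in a..b, γ x s) * φ t := by
  have hcx : ∀ x, Continuous (γ x) := fun x => hc.comp (by fun_prop : Continuous fun t => (x, t))
  let F : X → ℝ → ℝ := fun x t => ∫ s in a..t, γ x s
  have hF : Continuous fun q : X × ℝ => F q.1 q.2 := by
    apply intervalIntegral.continuous_parametric_intervalIntegral_of_continuous
      (f := fun (q : X × ℝ) s => γ q.1 s)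
    · exact hc.comp (by fun_prop : Continuous fun q : (X × ℝ) × ℝ => (q.1.1, q.2))
    · exact continuous_snd
  have hFd : ∀ x t, HasDerivAt (F x) (γ x t) t := fun x t =>
    (hcx x).integral_hasStrictDerivAt a t |>.hasDerivAt
  have hFm : ∀ x, StrictMono (F x) := fun x =>
    strictMono_of_hasDerivAt_pos (hFd x) (hp x)
  have hFa : ∀ x, F x a = 0 := fun x => by simp [F]
  have hFb : ∀ x, 0 < F x b := fun x => by rw [← hFa x]; exact hFm x hab
  have hFxc : ∀ x, Continuous (F x) := fun x => hF.comp (by fun_prop : Continuous fun t => (x, t))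
  let cl : ℝ → ℝ := fun e => max 0 (min 1 e)
  have hcl : Continuous cl := by fun_prop
  have hcl0 : ∀ e, 0 ≤ cl e := fun e => le_max_left _ _
  have hcl1 : ∀ e, cl e ≤ 1 := fun e => max_le zero_le_one (min_le_left _ _)
  have ex : ∀ x e, ∃ t ∈ Icc a b, F x t = cl e * F x b := by
    intro x e
    have := intermediate_value_Icc hab.le (hFxc x).continuousOn
    apply this
    rw [hFa]
    exact ⟨mul_nonneg (hcl0 e) (hFb x).le, mul_le_of_le_one_left (hFb x).le (hcl1 e)⟩
  choose f hfm hf using ex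
  refine ⟨f, ?_, ?_, ?_⟩
  · rw [OrderTopology.continuous_iff]
    intro t
    have h1 : Continuous fun q : X × ℝ => F q.1 t :=
      hF.comp (by fun_prop : Continuous fun q : X × ℝ => (q.1, t))
    have h2 : Continuous fun q : X × ℝ => cl q.2 * F q.1 b :=
      (hcl.comp continuous_snd).mul (hF.comp (by fun_prop : Continuous fun q : X × ℝ => (q.1, b)))
    constructor
    · convert isOpen_lt h1 h2 using 1
      ext q
      simp only [mem_preimage, mem_Ioi, mem_ofPred_eq]
      rw [← hf, (hFm q.1).lt_iff_lt]
    · convert isOpen_lt h2 h1 using 1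
      ext q
      simp only [mem_preimage, mem_Iio, mem_ofPred_eq]
      rw [← hf, (hFm q.1).lt_iff_lt]
  · intro x y hxy
    funext e
    apply (hFm x).injective
    have : F x = F y := by simp only [F, hxy]
    rw [hf, this, hf]
  · intro x φ
    have hne := (hFb x).ne'
    have him : (fun t => F x t / F x b) '' Icc a b = Icc 0 1 := by
      apply Subset.antisymm
      · rintro _ ⟨t, ht, rfl⟩
        constructor
        · apply div_nonneg _ (hFb x).le
          rw [← hFa x]; exact (hFm x).monotone ht.1
        · exact (div_le_one (hFb x)).2 ((hFm x).monotone ht.2)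
      · intro e he
        refine ⟨f x e, hfm x e, ?_⟩
        simp only [hf]
        rw [mul_div_cancel_right₀ _ hne]
        simp [cl, he.1, he.2]
    rw [← him, lintegral_image_eq_lintegral_abs_deriv_mul measurableSet_Icc
      (f' := fun t => γ x t / F x b)
      (fun t _ => ((hFd x t).div_const _).hasDerivWithinAt)
      (fun s _ t _ hst => (hFm x).injective (by simpa [div_left_inj' hne] using hst))]
    apply setLIntegral_congr_fun measurableSet_Icc
    intro t ht
    simp only
    have hft : f x (F x t / F x b) = t := by
      apply (hFm x).injective
      rw [hf]
      have h0 : 0 ≤ F x t / F x b := by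
        apply div_nonneg _ (hFb x).le
        rw [← hFa x]; exact (hFm x).monotone ht.1
      have h1 : F x t / F x b ≤ 1 := (div_le_one (hFb x)).2 ((hFm x).monotone ht.2)
      simp only [cl, min_eq_right h1, max_eq_right h0]
      field_simp
    rw [hft, abs_of_pos (div_pos (hp _ _) (hFb x))]

lemma measurable_upd {d : ℕ} (k : Fin d) (f : (Fin d → ℝ) → ℝ → ℝ)
    (hf : Measurable fun q : (Fin d → ℝ) × ℝ => f q.1 q.2) :
    Measurable fun z : Fin d → ℝ => Function.update z k (f z (z k)) := by
  rw [measurable_pi_iff]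
  intro j
  by_cases hj : j = k
  · subst hj
    simp only [Function.update_self]
    exact hf.comp (by fun_prop : Measurable fun z : Fin d → ℝ => (z, z j))
  · simpa [Function.update_of_ne hj] using measurable_pi_apply j

lemma step {d : ℕ} (k : Fin d) (A φ : (Fin d → ℝ) → ENNReal) (w u : (Fin d → ℝ) → ℝ → ENNReal)
    (f : (Fin d → ℝ) → ℝ → ℝ)
    (hA : Measurable A) (hφ : Measurable φ)
    (hf : Measurable fun q : (Fin d → ℝ) × ℝ => f q.1 q.2)
    (hw : Measurable fun q : (Fin d → ℝ) × ℝ => w q.1 q.2)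
    (hu : Measurable fun q : (Fin d → ℝ) × ℝ => u q.1 q.2)
    (hAk : ∀ z t, A (Function.update z k t) = A z)
    (hfk : ∀ z t, f (Function.update z k t) = f z)
    (hwk : ∀ z t, w (Function.update z k t) = w z)
    (huk : ∀ z t, u (Function.update z k t) = u z)
    (h1 : ∀ z, ∀ φ : ℝ → ENNReal, ∫⁻ e, u z e * φ (f z e) = ∫⁻ t, w z t * φ t) :
    ∫⁻ z, A z * u z (z k) * φ (Function.update z k (f z (z k))) =
      ∫⁻ z, A z * w z (z k) * φ z := by
  have m1 : Measurable fun z => A z * u z (z k) * φ (Function.update z k (f z (z k))) := by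
    refine (hA.mul (hu.comp (by fun_prop : Measurable fun z : Fin d → ℝ => (z, z k)))).mul (hφ.comp ?_)
    exact measurable_upd k f hf
  have m2 : Measurable fun z => A z * w z (z k) * φ z := by
    exact (hA.mul (hw.comp (by fun_prop : Measurable fun z : Fin d → ℝ => (z, z k)))).mul hφ
  rw [volume_pi, lintegral_eq_lmarginal_univ 0, lintegral_eq_lmarginal_univ 0]
  rw [lmarginal_erase' _ m1 (Finset.mem_univ k), lmarginal_erase' _ m2 (Finset.mem_univ k)]
  congr 1
  funext z
  simp only [hAk, hfk, hwk, huk, Function.update_self, Function.update_idem, mul_assoc]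
  have := h1 z (fun t => φ (Function.update z k t))
  have n1 : Measurable (Function.update z k) := measurable_update z
  have n2 : Measurable (fun t : ℝ => (z, t)) := by fun_prop
  rw [lintegral_const_mul, lintegral_const_mul, this]
  · exact (hw.comp n2).mul (hφ.comp n1)
  · exact (hu.comp n2).mul (hφ.comp (n1.comp (hf.comp n2)))

lemma chain {d : ℕ} (f : Fin d → (Fin d → ℝ) → ℝ → ℝ) (w : Fin d → (Fin d → ℝ) → ℝ → ENNReal)
    (u : ℝ → ENNReal) (hu : Measurable u)
    (hf : ∀ i, Measurable fun q : (Fin d → ℝ) × ℝ => f i q.1 q.2)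
    (hw : ∀ i, Measurable fun q : (Fin d → ℝ) × ℝ => w i q.1 q.2)
    (hfd : ∀ i, ∀ x y : Fin d → ℝ, (∀ j < i, x j = y j) → f i x = f i y)
    (hwd : ∀ i, ∀ x y : Fin d → ℝ, (∀ j < i, x j = y j) → w i x = w i y)
    (h1 : ∀ i, ∀ z, ∀ φ : ℝ → ENNReal, ∫⁻ e, u e * φ (f i z e) = ∫⁻ t, w i z t * φ t)
    (k : ℕ) (hk : k ≤ d) :
    ∃ H : (Fin d → ℝ) → Fin d → ℝ, Measurable H ∧
      (∀ e, ∀ i : Fin d, ((i : ℕ) < k → H e i = f i (H e) (e i)) ∧ (k ≤ i → H e i = e i)) ∧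
      ∀ φ : (Fin d → ℝ) → ENNReal, Measurable φ →
        ∫⁻ e, (∏ i, u (e i)) * φ (H e) =
          ∫⁻ z, (∏ i : Fin d, if (i : ℕ) < k then w i z (z i) else u (z i)) * φ z := by
  induction k with
  | zero =>
    refine ⟨id, measurable_id, by simp, ?_⟩
    intro φ _
    simp
  | succ k ih =>
    obtain ⟨H, hH, hHe, hHi⟩ := ih (by omega)
    let κ : Fin d := ⟨k, hk⟩
    have hT := measurable_upd κ (f κ) (hf κ)
    refine ⟨fun e => Function.update (H e) κ (f κ (H e) (H e κ)), hT.comp hH, ?_, ?_⟩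
    · intro e i
      beta_reduce
      have key : f i (Function.update (H e) κ (f κ (H e) (H e κ))) = f i (H e) ∨ k < i := by
        by_cases hki : k < i
        · exact Or.inr hki
        · left
          apply hfd
          intro j hj
          apply Function.update_of_ne
          rintro rfl
          exact hki hj
      constructor
      · intro hi
        rw [key.resolve_right (by omega)]
        by_cases hik : i = κ
        · subst hik
          rw [Function.update_self, (hHe e κ).2 le_rfl]
        · rw [Function.update_of_ne hik]
          have : (i : ℕ) ≠ k := fun h => hik (Fin.ext h)
          exact (hHe e i).1 (by omega)
      · intro hi
        have : i ≠ κ := by rintro rfl; simp [κ] at hi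
        rw [Function.update_of_ne this]
        exact (hHe e i).2 (by omega)
    · intro φ hφ
      rw [hHi (fun z => φ (Function.update z κ (f κ z (z κ)))) (hφ.comp hT)]
      let A : (Fin d → ℝ) → ENNReal := fun z =>
        ∏ i ∈ Finset.univ.erase κ, if (i : ℕ) < k then w i z (z i) else u (z i)
      have e1 : ∀ z : Fin d → ℝ, (∏ i : Fin d, if (i : ℕ) < k then w i z (z i) else u (z i))
          = A z * u (z κ) := by
        intro z
        rw [← Finset.prod_erase_mul _ _ (Finset.mem_univ κ)]
        simp [A, κ]
      have e2 : ∀ z : Fin d → ℝ, (∏ i : Fin d, if (i : ℕ) < k + 1 then w i z (z i) else u (z i))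
          = A z * w κ z (z κ) := by
        intro z
        rw [← Finset.prod_erase_mul _ _ (Finset.mem_univ κ)]
        congr 1
        · apply Finset.prod_congr rfl
          intro i hi
          have : (i : ℕ) ≠ k := fun h => (Finset.ne_of_mem_erase hi) (Fin.ext h)
          have : (i : ℕ) < k + 1 ↔ (i : ℕ) < k := by omega
          simp only [this]
        · simp [κ]
      simp only [e1, e2]
      apply step κ A φ (w κ) (fun _ => u) (f κ) _ hφ (hf κ) (hw κ) (hu.comp measurable_snd) _ _ _
        (fun _ _ => rfl) (h1 κ)
      · apply Finset.measurable_fun_prod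
        intro i _
        split_ifs
        · exact (hw i).comp (by fun_prop : Measurable fun z : Fin d → ℝ => (z, z i))
        · exact hu.comp (measurable_pi_apply i)
      · intro z t
        apply Finset.prod_congr rfl
        intro i hi
        have hne := Finset.ne_of_mem_erase hi
        rw [Function.update_of_ne hne]
        split_ifs with hik
        · rw [hwd i (Function.update z κ t) z]
          intro j hj
          apply Function.update_of_ne
          rintro rfl
          have : k < (i : ℕ) := hj
          omega
        · rfl
      · intro z t
        apply hfd
        intro j hj
        exact Function.update_of_ne hj.ne _ _
      · intro z t
        apply hwd
        intro j hj
        exact Function.update_of_ne hj.ne _ _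

/-- Proposition 1 of the paper: representing joint distributions with FCMs.
If the joint density `h` of `P` on `ℝ^d` is continuous and strictly positive on a compact box
`K = ∏ [aᵢ,bᵢ]` and zero elsewhere, and factorizes along a DAG with parent sets `Pa i ⊆ {j < i}`
as `h x = ∏ᵢ gᵢ(x_{Pa i}, xᵢ)` where each `gᵢ` is continuous and a conditional probability
density, then there are continuous causal mechanisms `fᵢ` (depending only on the parent
coordinates and one noise coordinate) whose recursively defined generator `G`
(`G e i = fᵢ((G e)_{Pa i}, eᵢ)`) pushes the uniform measure on `[0,1]^d` forward to `P`. -/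
theorem stmt3 (d : ℕ) (a b : Fin d → ℝ) (hab : ∀ i, a i < b i)
    (h : (Fin d → ℝ) → ℝ)
    (K : Set (Fin d → ℝ)) (hKdef : K = Set.univ.pi fun i => Icc (a i) (b i))
    (hcont : ContinuousOn h K)
    (hpos : ∀ x ∈ K, 0 < h x)
    (hzero : ∀ x ∉ K, h x = 0)
    (P : Measure (Fin d → ℝ)) [IsProbabilityMeasure P]
    (hP : P = volume.withDensity fun x => ENNReal.ofReal (h x))
    (Pa : Fin d → Finset (Fin d)) (hPa : ∀ i, ∀ j ∈ Pa i, j < i)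
    (g : Fin d → (Fin d → ℝ) → ℝ → ℝ)
    (hgdep : ∀ i, ∀ x y : Fin d → ℝ, (∀ j ∈ Pa i, x j = y j) → g i x = g i y)
    (hgcont : ∀ i, ContinuousOn (fun q : (Fin d → ℝ) × ℝ => g i q.1 q.2) (K ×ˢ Icc (a i) (b i)))
    (hgnonneg : ∀ i, ∀ x ∈ K, ∀ t : ℝ, 0 ≤ g i x t)
    (hgdens : ∀ i, ∀ x ∈ K, ∫ t, g i x t = 1)
    (hfact : ∀ x, h x = ∏ i, g i x (x i)) :
    ∃ f : Fin d → (Fin d → ℝ) → ℝ → ℝ,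
      (∀ i, Continuous fun q : (Fin d → ℝ) × ℝ => f i q.1 q.2) ∧
      (∀ i, ∀ x y : Fin d → ℝ, (∀ j ∈ Pa i, x j = y j) → f i x = f i y) ∧
      ∃ G : (Fin d → ℝ) → Fin d → ℝ,
        Measurable G ∧
        (∀ e i, G e i = f i (G e) (e i)) ∧
        Measure.map G (volume.restrict (Set.univ.pi fun _ : Fin d => Icc (0:ℝ) 1)) = P := by
  classical
  let cl : (Fin d → ℝ) → Fin d → ℝ := fun x i => max (a i) (min (b i) (x i))
  have hclc : Continuous cl := by fun_prop
  have hclK : ∀ x, cl x ∈ K := by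
    intro x
    rw [hKdef]
    intro i _
    exact ⟨le_max_left _ _, max_le (hab i).le (min_le_left _ _)⟩
  have hclid : ∀ x ∈ K, cl x = x := by
    intro x hx
    rw [hKdef] at hx
    funext i
    have := hx i trivial
    simp only [cl, min_eq_right this.2, max_eq_right this.1]
  have hgpos : ∀ i, ∀ x ∈ K, ∀ t ∈ Icc (a i) (b i), 0 < g i x t := by
    intro i x hx t ht
    have hy : Function.update x i t ∈ K := by
      rw [hKdef] at hx ⊢
      intro j _
      by_cases hj : j = i
      · subst hj; simpa using ht
      · simpa [Function.update_of_ne hj] using hx j trivial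
    have hne : g i (Function.update x i t) (Function.update x i t i) ≠ 0 := by
      have := (hpos _ hy).ne'
      rw [hfact] at this
      exact (Finset.prod_ne_zero_iff.1 this) i (Finset.mem_univ i)
    rw [Function.update_self, hgdep i _ x] at hne
    · exact lt_of_le_of_ne (hgnonneg i x hx t) hne.symm
    · intro j hj
      exact Function.update_of_ne (hPa i j hj).ne _ _
  let γ : Fin d → (Fin d → ℝ) → ℝ → ℝ := fun i x t => g i (cl x) (max (a i) (min (b i) t))
  have hclI : ∀ i, ∀ t, max (a i) (min (b i) t) ∈ Icc (a i) (b i) := fun i t =>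
    ⟨le_max_left _ _, max_le (hab i).le (min_le_left _ _)⟩
  have hγc : ∀ i, Continuous fun q : (Fin d → ℝ) × ℝ => γ i q.1 q.2 := by
    intro i
    exact (hgcont i).comp_continuous
      (f := fun q : (Fin d → ℝ) × ℝ => (cl q.1, max (a i) (min (b i) q.2)))
      (by fun_prop) (fun q => ⟨hclK _, hclI _ _⟩)
  have hγp : ∀ i x t, 0 < γ i x t := fun i x t => hgpos i _ (hclK x) _ (hclI i t)
  have hγd : ∀ i, ∀ x y : Fin d → ℝ, (∀ j ∈ Pa i, x j = y j) → γ i x = γ i y := by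
    intro i x y hxy
    funext t
    simp only [γ]
    rw [hgdep i (cl x) (cl y)]
    intro j hj
    simp only [cl, hxy j hj]
  choose f hfc hfd hfi using fun i => oneD (γ i) (hγc i) (hγp i) (a i) (b i) (hab i)
  let c : Fin d → (Fin d → ℝ) → ℝ := fun i x => ∫ s in (a i)..(b i), γ i x s
  have hcc : ∀ i, Continuous (c i) := fun i =>
    intervalIntegral.continuous_parametric_intervalIntegral_of_continuous' (hγc i) _ _
  have hcpos : ∀ i x, 0 < c i x := fun i x =>
    intervalIntegral.intervalIntegral_pos_of_pos
      (((hγc i).comp (by fun_prop : Continuous fun t : ℝ => (x, t))).intervalIntegrable _ _)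
      (hγp i x) (hab i)
  have hcle : ∀ i, ∀ x ∈ K, c i x ≤ 1 := by
    intro i x hx
    have hint : Integrable (g i x) := by
      by_contra hn
      have := hgdens i x hx
      rw [integral_undef hn] at this
      exact zero_ne_one this
    rw [← hgdens i x hx]
    have : c i x = ∫ t in Icc (a i) (b i), g i x t := by
      simp only [c]
      rw [intervalIntegral.integral_of_le (hab i).le, ← integral_Icc_eq_integral_Ioc]
      apply setIntegral_congr_fun measurableSet_Icc
      intro t ht
      simp only [γ, hclid x hx, min_eq_right ht.2, max_eq_right ht.1]
    rw [this]
    exact setIntegral_le_integral hint (Filter.Eventually.of_forall (hgnonneg i x hx))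
  let u : ℝ → ENNReal := (Icc (0:ℝ) 1).indicator 1
  have hu : Measurable u := measurable_one.indicator measurableSet_Icc
  let w : Fin d → (Fin d → ℝ) → ℝ → ENNReal := fun i x t =>
    (Icc (a i) (b i)).indicator 1 t * ENNReal.ofReal (γ i x t / c i x)
  have hw : ∀ i, Measurable fun q : (Fin d → ℝ) × ℝ => w i q.1 q.2 := by
    intro i
    refine Measurable.mul ?_ ?_
    · exact (measurable_one.indicator measurableSet_Icc).comp measurable_snd
    · exact ((hγc i).measurable.div ((hcc i).measurable.comp measurable_fst)).ennreal_ofReal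
  have hfdep : ∀ i, ∀ x y : Fin d → ℝ, (∀ j ∈ Pa i, x j = y j) → f i x = f i y :=
    fun i x y hxy => hfd i x y (hγd i x y hxy)
  obtain ⟨G, hGm, hGe, hGi⟩ := chain f w u hu (fun i => (hfc i).measurable) hw
    (fun i x y hxy => hfdep i x y fun j hj => hxy j (hPa i j hj))
    (fun i x y hxy => by
      have := hγd i x y fun j hj => hxy j (hPa i j hj)
      simp only [w, c, this])
    (fun i z φ => by
      have := hfi i z φ
      rw [← lintegral_indicator measurableSet_Icc, ← lintegral_indicator measurableSet_Icc] at this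
      convert this using 2
      · funext e
        by_cases he : e ∈ Icc (0:ℝ) 1 <;> simp only [u, he, indicator_of_mem,
          indicator_of_notMem, not_false_eq_true, Pi.one_apply, one_mul, zero_mul]
      · funext e
        by_cases he : e ∈ Icc (a i) (b i) <;> simp only [w, c, he, indicator_of_mem,
          indicator_of_notMem, not_false_eq_true, Pi.one_apply, one_mul, zero_mul])
    d le_rfl
  refine ⟨f, hfc, hfdep, G, hGm, fun e i => (hGe e i).1 i.2, ?_⟩
  set B : Set (Fin d → ℝ) := Set.univ.pi fun _ : Fin d => Icc (0:ℝ) 1 with hB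
  have hBm : MeasurableSet B := MeasurableSet.univ_pi fun _ => measurableSet_Icc
  have hQ : Measure.map G (volume.restrict B) =
      volume.withDensity fun z => ∏ i, w i z (z i) := by
    apply Measure.ext
    intro s hs
    rw [← lintegral_indicator_one hs, lintegral_map (measurable_one.indicator hs) hGm,
      withDensity_apply _ hs, ← lintegral_indicator hBm, ← lintegral_indicator hs]
    have := hGi (s.indicator 1) (measurable_one.indicator hs)
    simp only [Fin.is_lt, if_true] at this
    refine Eq.trans (lintegral_congr fun e => ?_) (this.trans (lintegral_congr fun z => ?_))
    · show B.indicator (fun e => s.indicator 1 (G e)) e = _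
      by_cases he : e ∈ B
      · rw [indicator_of_mem he, Finset.prod_eq_one, one_mul]
        intro i _
        exact indicator_of_mem (he i trivial) _
      · rw [indicator_of_notMem he]
        simp only [hB, mem_univ_pi, not_forall] at he
        obtain ⟨i, hi⟩ := he
        rw [Finset.prod_eq_zero (Finset.mem_univ i) (indicator_of_notMem hi _), zero_mul]
    · by_cases hz : z ∈ s <;> simp [hz]
  have hle : P ≤ Measure.map G (volume.restrict B) := by
    rw [hQ, hP]
    apply withDensity_mono
    refine Filter.Eventually.of_forall fun x => ?_
    simp only
    by_cases hx : x ∈ K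
    · rw [hfact, ENNReal.ofReal_prod_of_nonneg (fun i _ => hgnonneg i x hx _)]
      apply Finset.prod_le_prod'
      intro i _
      have hxi : x i ∈ Icc (a i) (b i) := by
        rw [hKdef] at hx
        exact hx i trivial
      simp only [w, indicator_of_mem hxi, Pi.one_apply, one_mul]
      apply ENNReal.ofReal_le_ofReal
      have : γ i x (x i) = g i x (x i) := by
        simp only [γ, hclid x hx, min_eq_right hxi.2, max_eq_right hxi.1]
      rw [this]
      exact le_div_self (hgnonneg i x hx _) (hcpos i x) (hcle i x hx)
    · rw [hzero x hx]
      simp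
  symm
  apply Measure.eq_of_le_of_measure_univ_eq hle
  rw [measure_univ, Measure.map_apply hGm MeasurableSet.univ, preimage_univ,
    Measure.restrict_apply_univ, hB, volume_pi_pi]
  simp
end

section
/- Let G be a directed acyclic graph on {1,…,d} with parent sets Pa(i) ⊆ {1,…,i−1} (indices in a topological order of G), and let f_i : ℝ^{|Pa(i)|} × [0,1] → ℝ be continuous functions. Define the generator G_f : [0,1]^d → ℝ^d recursively in topological order by G_f(e)_i = f_i((G_f(e)_j)_{j ∈ Pa(i)}, e_i). Fix ε_0 > 0 and let C_i ⊂ ℝ^{|Pa(i)|} be compact sets containing the closed ε_0-neighborhood of the range of e ↦ (G_f(e)_j)_{j ∈ Pa(i)}. Then for every ε ∈ (0, ε_0] there exists η > 0 such that for all continuous functions f̂_i : ℝ^{|Pa(i)|} × [0,1] → ℝ satisfying sup_{(u,e) ∈ C_i × [0,1]} |f̂_i(u,e) − f_i(u,e)| < η for every i, the generator G_{f̂} defined recursively from the f̂_i satisfies sup_{e ∈ [0,1]^d} ‖G_f(e) − G_{f̂}(e)‖ < ε. -/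
open Set

/-- abstract form of Proposition 2: the recursive FCM generator depends
continuously, in supremum norm over the noise cube `[0,1]^d`, on the causal mechanisms.
Given a DAG with parent sets `Pa i ⊆ {j < i}`, continuous mechanisms `fᵢ`, the generator `G`
defined by `G e i = fᵢ((G e)_{Pa i}, eᵢ)`, and compact sets `Cᵢ` containing the closed
`ε₀`-neighborhood of the range of `e ↦ (G e)_{Pa i}` over the cube, for every `ε ∈ (0, ε₀]`
there is `η > 0` such that any continuous mechanisms `f̂ᵢ` that are `η`-close to `fᵢ` on
`Cᵢ × [0,1]` produce a generator `Ĝ` with `‖G e − Ĝ e‖ < ε` for all `e ∈ [0,1]^d`. -/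
theorem stmt5 (d : ℕ)
    (Pa : Fin d → Finset (Fin d)) (hPa : ∀ i, ∀ j ∈ Pa i, j < i)
    (f : (i : Fin d) → (↥(Pa i) → ℝ) → ℝ → ℝ)
    (hf : ∀ i, Continuous fun q : (↥(Pa i) → ℝ) × ℝ => f i q.1 q.2)
    (G : (Fin d → ℝ) → Fin d → ℝ)
    (hG : ∀ (e : Fin d → ℝ) (i : Fin d), G e i = f i (fun j => G e j.1) (e i))
    (ε₀ : ℝ) (hε₀ : 0 < ε₀)
    (C : (i : Fin d) → Set (↥(Pa i) → ℝ))
    (hCcompact : ∀ i, IsCompact (C i))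
    (hC : ∀ i, Metric.cthickening ε₀
        ((fun e : Fin d → ℝ => fun j : ↥(Pa i) => G e j.1) ''
          (Set.univ.pi fun _ : Fin d => Icc (0:ℝ) 1)) ⊆ C i) :
    ∀ ε : ℝ, 0 < ε → ε ≤ ε₀ →
      ∃ η > (0:ℝ), ∀ fhat : (i : Fin d) → (↥(Pa i) → ℝ) → ℝ → ℝ,
        (∀ i, Continuous fun q : (↥(Pa i) → ℝ) × ℝ => fhat i q.1 q.2) →
        (∀ i, ∀ u ∈ C i, ∀ e ∈ Icc (0:ℝ) 1, |fhat i u e - f i u e| < η) →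
        ∀ Ghat : (Fin d → ℝ) → Fin d → ℝ,
          (∀ (e : Fin d → ℝ) (i : Fin d), Ghat e i = fhat i (fun j => Ghat e j.1) (e i)) →
          ∀ e ∈ Set.univ.pi fun _ : Fin d => Icc (0:ℝ) 1, ‖G e - Ghat e‖ < ε := by
  have key : ∀ n : ℕ, ∀ ε : ℝ, 0 < ε → ε ≤ ε₀ →
      ∃ η > (0:ℝ), ∀ fhat : (i : Fin d) → (↥(Pa i) → ℝ) → ℝ → ℝ,
        (∀ i, ∀ u ∈ C i, ∀ e ∈ Icc (0:ℝ) 1, |fhat i u e - f i u e| < η) →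
        ∀ Ghat : (Fin d → ℝ) → Fin d → ℝ,
          (∀ (e : Fin d → ℝ) (i : Fin d), Ghat e i = fhat i (fun j => Ghat e j.1) (e i)) →
          ∀ e ∈ Set.univ.pi fun _ : Fin d => Icc (0:ℝ) 1,
            ∀ i : Fin d, i.val < n → dist (G e i) (Ghat e i) < ε := by
    intro n
    induction n with
    | zero =>
      intro ε _ _
      exact ⟨1, one_pos, fun _ _ _ _ _ _ i hi => absurd hi (Nat.not_lt_zero _)⟩
    | succ n ih =>
      intro ε hε hεε
      by_cases hn : n < d
      · obtain ⟨k, hk⟩ : ∃ k : Fin d, k.val = n := ⟨⟨n, hn⟩, rfl⟩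
        have huc : UniformContinuousOn (fun q : (↥(Pa k) → ℝ) × ℝ => f k q.1 q.2)
            (C k ×ˢ Icc (0:ℝ) 1) :=
          ((hCcompact k).prod isCompact_Icc).uniformContinuousOn_of_continuous
            (hf k).continuousOn
        obtain ⟨δ, hδ, hδf⟩ := Metric.uniformContinuousOn_iff.1 huc (ε / 2) (half_pos hε)
        obtain ⟨η, hη, H⟩ := ih (min δ ε) (lt_min hδ hε) ((min_le_right _ _).trans hεε)
        refine ⟨min η (ε / 2), lt_min hη (half_pos hε), ?_⟩
        intro fhat hfh Ghat hGh e he i hi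
        have H' := H fhat (fun i u hu t ht => (hfh i u hu t ht).trans_le (min_le_left _ _))
          Ghat hGh e he
        rcases Nat.lt_succ_iff_lt_or_eq.1 hi with h | h
        · exact (H' i h).trans_le (min_le_right _ _)
        · obtain rfl : i = k := Fin.ext (h.trans hk.symm)
          have hd : dist (fun j : ↥(Pa i) => G e j.1) (fun j : ↥(Pa i) => Ghat e j.1)
              < min δ ε := by
            rw [dist_pi_lt_iff (lt_min hδ hε)]
            intro j
            refine H' j.1 ?_
            have := hPa i j.1 j.2
            rw [← h]
            exact this
          have hmem : (fun j : ↥(Pa i) => G e j.1) ∈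
              ((fun e : Fin d → ℝ => fun j : ↥(Pa i) => G e j.1) ''
              (Set.univ.pi fun _ : Fin d => Icc (0:ℝ) 1)) := ⟨e, he, rfl⟩
          have hu : (fun j : ↥(Pa i) => G e j.1) ∈ C i :=
            hC i (Metric.self_subset_cthickening _ hmem)
          have hv : (fun j : ↥(Pa i) => Ghat e j.1) ∈ C i := by
            refine hC i (Metric.mem_cthickening_of_dist_le _ _ _ _ hmem ?_)
            rw [dist_comm]
            exact (hd.trans_le ((min_le_right _ _).trans hεε)).le
          have hei : e i ∈ Icc (0:ℝ) 1 := he i (Set.mem_univ i)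
          have h1 := hδf ((fun j : ↥(Pa i) => G e j.1), e i) ⟨hu, hei⟩
            ((fun j : ↥(Pa i) => Ghat e j.1), e i) ⟨hv, hei⟩ (by
              rw [Prod.dist_eq, dist_self]
              exact max_lt (hd.trans_le (min_le_left _ _)) hδ)
          have h2 := (hfh i _ hv _ hei).trans_le (min_le_right _ _)
          rw [← Real.dist_eq, dist_comm] at h2
          rw [hG e i, hGh e i]
          refine (dist_triangle _ (f i (fun j : ↥(Pa i) => Ghat e j.1) (e i)) _).trans_lt ?_
          have h3 := add_lt_add h1 h2
          rw [add_halves] at h3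
          exact h3
      · obtain ⟨η, hη, H⟩ := ih ε hε hεε
        exact ⟨η, hη, fun fhat hfh Ghat hGh e he i _ =>
          H fhat hfh Ghat hGh e he i (by have := i.2; omega)⟩
  intro ε hε hεε
  obtain ⟨η, hη, H⟩ := key d ε hε hεε
  refine ⟨η, hη, fun fhat _ hfh Ghat hGh e he => ?_⟩
  rw [← dist_eq_norm, dist_pi_lt_iff hε]
  exact fun i => H fhat hfh Ghat hGh e he i i.2
end

section
/- Call a function φ : ℝ^q → ℝ a one-hidden-layer ReLU network if there exist N ∈ ℕ, real coefficients c_0, c_1, …, c_N, vectors w_1, …, w_N ∈ ℝ^q, and biases b_1, …, b_N ∈ ℝ such that φ(u) = c_0 + Σ_{j=1}^{N} c_j · max(0, ⟨w_j, u⟩ + b_j). Let G be a directed acyclic graph on {1,…,d} with parent sets Pa(i) ⊆ {1,…,i−1} (indices in a topological order of G), let f_i : ℝ^{|Pa(i)|} × [0,1] → ℝ be continuous functions, and define the generator G_f : [0,1]^d → ℝ^d recursively in topological order by G_f(e)_i = f_i((G_f(e)_j)_{j ∈ Pa(i)}, e_i). Then for every ε > 0 there exist one-hidden-layer ReLU networks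 f̂_i : ℝ^{|Pa(i)|+1} → ℝ such that the generator G_{f̂} defined recursively from the f̂_i satisfies sup_{e ∈ [0,1]^d} ‖G_f(e) − G_{f̂}(e)‖ < ε. -/
open Set

/-- A one-hidden-layer ReLU network on `ℝ^α`: `φ u = c₀ + ∑ⱼ cⱼ · max(0, ⟨wⱼ, u⟩ + bⱼ)`. -/
def IsOneHiddenLayerReLUNet {α : Type*} [Fintype α] (φ : (α → ℝ) → ℝ) : Prop :=
  ∃ (N : ℕ) (c₀ : ℝ) (c : Fin N → ℝ) (w : Fin N → α → ℝ) (bias : Fin N → ℝ),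
    ∀ u : α → ℝ, φ u = c₀ + ∑ j, c j * max 0 ((∑ l, w j l * u l) + bias j)

lemma net_const {α : Type*} [Fintype α] (a : ℝ) :
    IsOneHiddenLayerReLUNet (fun _ : α → ℝ => a) :=
  ⟨0, a, fun _ => 0, fun _ _ => 0, fun _ => 0, fun u => by simp⟩

lemma net_add {α : Type*} [Fintype α] {p q : (α → ℝ) → ℝ}
    (hp : IsOneHiddenLayerReLUNet p) (hq : IsOneHiddenLayerReLUNet q) :
    IsOneHiddenLayerReLUNet (fun u => p u + q u) := by
  obtain ⟨N, c₀, c, w, b, h⟩ := hp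
  obtain ⟨N', c₀', c', w', b', h'⟩ := hq
  refine ⟨N + N', c₀ + c₀', Fin.append c c', Fin.append w w', Fin.append b b', fun u => ?_⟩
  rw [Fin.sum_univ_add]
  simp only [Fin.append_left, Fin.append_right, h, h']
  ring

lemma net_smul {α : Type*} [Fintype α] {p : (α → ℝ) → ℝ} (a : ℝ)
    (hp : IsOneHiddenLayerReLUNet p) :
    IsOneHiddenLayerReLUNet (fun u => a * p u) := by
  obtain ⟨N, c₀, c, w, b, h⟩ := hp
  refine ⟨N, a * c₀, fun j => a * c j, w, b, fun u => ?_⟩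
  simp only [h, mul_add, Finset.mul_sum, mul_assoc]

lemma net_relu {α : Type*} [Fintype α] (w : α → ℝ) (b : ℝ) :
    IsOneHiddenLayerReLUNet (fun u : α → ℝ => max 0 ((∑ l, w l * u l) + b)) :=
  ⟨1, 0, fun _ => 1, fun _ => w, fun _ => b, fun u => by simp⟩

lemma relu_interp {α : Type*} [Fintype α] (w : α → ℝ) (h : ℝ → ℝ) (a δ η : ℝ) (hδ : 0 < δ)
    (hη : 0 < η) (n : ℕ)
    (hh : ∀ s ∈ Icc a (a + n * δ), ∀ t ∈ Icc a (a + n * δ), |s - t| ≤ δ → |h s - h t| ≤ η) :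
    ∃ p : ℝ → ℝ, IsOneHiddenLayerReLUNet (fun u : α → ℝ => p (∑ l, w l * u l)) ∧
      (∀ t, a + n * δ ≤ t → p t = h (a + n * δ)) ∧
      ∀ t ∈ Icc a (a + n * δ), |h t - p t| ≤ η := by
  induction n with
  | zero =>
    refine ⟨fun _ => h a, net_const _, fun t _ => by simp, fun t ht => ?_⟩
    have : t = a := by
      have h1 := ht.1
      have h2 := ht.2
      push_cast at h2
      linarith
    subst this
    simpa using hη.le
  | succ n ih =>
    have hx : a + ((n + 1 : ℕ) : ℝ) * δ = (a + n * δ) + δ := by push_cast; ring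
    rw [hx] at hh ⊢
    have hn : (0 : ℝ) ≤ n * δ := by positivity
    obtain ⟨p, hp, hpc, hpa⟩ := ih (fun s hs t ht => hh s ⟨hs.1, by linarith [hs.2]⟩ t
      ⟨ht.1, by linarith [ht.2]⟩)
    set x := a + n * δ with hxdef
    have hax : a ≤ x := by linarith
    refine ⟨fun t => p t + ((h (x + δ) - h x) / δ) * (max 0 (t + -x) +
      (-1) * max 0 (t + -(x + δ))), ?_, ?_, ?_⟩
    · exact net_add hp (net_smul _ (net_add (net_relu w _) (net_smul _ (net_relu w _))))
    · intro t ht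
      simp only
      rw [hpc t (by linarith), max_eq_right (by linarith), max_eq_right (by linarith)]
      field_simp
      ring
    · intro t ht
      simp only
      rw [max_eq_left (by linarith [ht.2] : t + -(x + δ) ≤ 0)]
      rcases le_total t x with htx | htx
      · rw [max_eq_left (by linarith)]
        simpa using hpa t ⟨ht.1, htx⟩
      · rw [max_eq_right (by linarith), hpc t htx]
        have h1 := hh t ht x ⟨hax, by linarith⟩ (by rw [abs_le]; constructor <;> linarith [ht.2])
        have h2 := hh t ht (x + δ) ⟨by linarith, le_refl _⟩
          (by rw [abs_le]; constructor <;> linarith [ht.2])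
        set θ := (t - x) / δ with hθ
        have hθ0 : 0 ≤ θ := div_nonneg (by linarith) hδ.le
        have hθ1 : θ ≤ 1 := by rw [hθ, div_le_one hδ]; linarith [ht.2]
        have e : h t - (h x + (h (x + δ) - h x) / δ * (t + -x + -1 * 0)) =
            (1 - θ) * (h t - h x) + θ * (h t - h (x + δ)) := by
          rw [hθ]; field_simp; ring
        rw [e]
        rw [abs_le] at h1 h2 ⊢
        constructor <;> nlinarith

lemma relu_approx_one {α : Type*} [Fintype α] (w : α → ℝ) (h : ℝ → ℝ) (hc : Continuous h)
    (M η : ℝ) (hM : 0 < M) (hη : 0 < η) :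
    ∃ p : ℝ → ℝ, IsOneHiddenLayerReLUNet (fun u : α → ℝ => p (∑ l, w l * u l)) ∧
      ∀ t ∈ Icc (-M) M, |h t - p t| ≤ η := by
  have huc := (isCompact_Icc (a := -M) (b := M)).uniformContinuousOn_of_continuous hc.continuousOn
  rw [Metric.uniformContinuousOn_iff] at huc
  obtain ⟨δ, hδ, H⟩ := huc η hη
  obtain ⟨n, hn⟩ := exists_nat_gt (2 * M / δ)
  have hn0 : (0 : ℝ) < n := lt_trans (by positivity) hn
  have e : -M + n * (2 * M / n) = M := by field_simp; ring
  have hlt : 2 * M / n < δ := by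
    rw [div_lt_iff₀ hδ] at hn
    rw [div_lt_iff₀ hn0]; linarith
  obtain ⟨p, hp, -, hpa⟩ := relu_interp w h (-M) (2 * M / n) η (by positivity) hη n (by
    rw [e]
    intro s hs t ht hst
    exact (H s hs t ht (lt_of_le_of_lt hst hlt)).le)
  rw [e] at hpa
  exact ⟨p, hp, hpa⟩

lemma relu_universal {α : Type*} [Fintype α] (K : Set (α → ℝ)) (hK : IsCompact K)
    (F : (α → ℝ) → ℝ) (hF : Continuous F) (ε : ℝ) (hε : 0 < ε) :
    ∃ φ, IsOneHiddenLayerReLUNet φ ∧ ∀ u ∈ K, |F u - φ u| < ε := by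
  have : CompactSpace K := isCompact_iff_compactSpace.mp hK
  let E : Multiplicative (α → ℝ) →* C(K, ℝ) :=
    { toFun := fun w => ⟨fun u => Real.exp (∑ l, (Multiplicative.toAdd w) l * u.1 l),
        Real.continuous_exp.comp (continuous_finset_sum _ fun l _ => continuous_const.mul
          ((continuous_apply l).comp continuous_subtype_val))⟩
      map_one' := by ext u; simp
      map_mul' := by
        intro v w; ext u
        simp [add_mul, Finset.sum_add_distrib, Real.exp_add] }
  let A : Subalgebra ℝ C(K, ℝ) := Algebra.adjoin ℝ (MonoidHom.mrange E : Set C(K, ℝ))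
  have hsep : A.SeparatesPoints := by
    classical
    intro x y hxy
    have : ∃ l, x.1 l ≠ y.1 l := by
      by_contra hcon
      push Not at hcon
      exact hxy (Subtype.ext (funext hcon))
    obtain ⟨l, hl⟩ := this
    refine ⟨_, ⟨E (Multiplicative.ofAdd (Pi.single l 1)), Algebra.subset_adjoin ⟨_, rfl⟩, rfl⟩, ?_⟩
    simpa [E, Pi.single_apply] using hl
  have happ : ∀ q ∈ A, ∀ η : ℝ, 0 < η →
      ∃ φ, IsOneHiddenLayerReLUNet φ ∧ ∀ u : K, |q u - φ u.1| < η := by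
    intro q hq
    have hq' : q ∈ Submodule.span ℝ (MonoidHom.mrange E : Set C(K, ℝ)) := by
      have : q ∈ Subalgebra.toSubmodule A := hq
      rwa [Algebra.adjoin_eq_span, Submonoid.closure_eq] at this
    clear hq
    induction hq' using Submodule.span_induction with
    | mem q hq =>
      obtain ⟨w, rfl⟩ := hq
      intro η hη
      have hb : Bornology.IsBounded ((fun u : α → ℝ => ∑ l, (Multiplicative.toAdd w) l * u l) '' K) :=
        (hK.image (by fun_prop)).isBounded
      obtain ⟨M, hM, hMb⟩ := hb.exists_pos_norm_le
      obtain ⟨p, hp, hpa⟩ := relu_approx_one (Multiplicative.toAdd w) Real.exp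
        Real.continuous_exp M (η / 2) hM (by positivity)
      refine ⟨_, hp, fun u => ?_⟩
      have := hpa _ (abs_le.mp (hMb _ ⟨u.1, u.2, rfl⟩))
      exact lt_of_le_of_lt this (by linarith)
    | zero => exact fun η hη => ⟨_, net_const 0, fun u => by simpa using hη⟩
    | add x y hx hy ihx ihy =>
      intro η hη
      obtain ⟨φ, h1, h2⟩ := ihx (η / 2) (by positivity)
      obtain ⟨ψ, h3, h4⟩ := ihy (η / 2) (by positivity)
      refine ⟨_, net_add h1 h3, fun u => ?_⟩
      have a1 := h2 u
      have a2 := h4 u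
      rw [abs_lt] at a1 a2 ⊢
      simp only [ContinuousMap.add_apply]
      constructor <;> linarith
    | smul a x hx ihx =>
      intro η hη
      obtain ⟨φ, h1, h2⟩ := ihx (η / (|a| + 1)) (by positivity)
      refine ⟨_, net_smul a h1, fun u => ?_⟩
      have a1 := h2 u
      rw [lt_div_iff₀ (by positivity)] at a1
      simp only [ContinuousMap.smul_apply, smul_eq_mul]
      rw [← mul_sub, abs_mul]
      rcases eq_or_ne (|x u - φ u.1|) 0 with h0 | h0
      · rw [h0]; simpa using hη
      · have : 0 < |x u - φ u.1| := lt_of_le_of_ne (abs_nonneg _) (Ne.symm h0)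
        nlinarith
  obtain ⟨q, hq⟩ := ContinuousMap.exists_mem_subalgebra_near_continuousMap_of_separatesPoints A hsep
    ⟨fun u : K => F u.1, by fun_prop⟩ (ε / 2) (by positivity)
  obtain ⟨φ, h1, h2⟩ := happ q.1 q.2 (ε / 2) (by positivity)
  refine ⟨φ, h1, fun u hu => ?_⟩
  have a1 := h2 ⟨u, hu⟩
  have a2 := lt_of_le_of_lt (ContinuousMap.norm_coe_le_norm _ (⟨u, hu⟩ : K)) hq
  rw [Real.norm_eq_abs] at a2
  simp only [ContinuousMap.sub_apply, ContinuousMap.coe_mk] at a2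
  rw [abs_lt] at a1 a2 ⊢
  constructor <;> linarith

lemma gen_approx (d : ℕ)
    (Pa : Fin d → Finset (Fin d)) (hPa : ∀ i, ∀ j ∈ Pa i, j < i)
    (f : (i : Fin d) → (↥(Pa i) → ℝ) → ℝ → ℝ)
    (hf : ∀ i, Continuous fun q : (↥(Pa i) → ℝ) × ℝ => f i q.1 q.2)
    (G : (Fin d → ℝ) → Fin d → ℝ)
    (hG : ∀ (e : Fin d → ℝ) (i : Fin d), G e i = f i (fun j => G e j.1) (e i)) (n : ℕ) :
    n ≤ d → ∀ ε : ℝ, 0 < ε →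
      ∃ φ : (i : Fin d) → (↥(Pa i) ⊕ Unit → ℝ) → ℝ,
        (∀ i, IsOneHiddenLayerReLUNet (φ i)) ∧
        ∀ e ∈ Set.univ.pi fun _ : Fin d => Icc (0:ℝ) 1, ∀ g : Fin d → ℝ,
          (∀ i : Fin d, i.1 < n → g i = φ i (Sum.elim (fun j => g j.1) (fun _ => e i))) →
          ∀ i : Fin d, i.1 < n → |G e i - g i| < ε := by
  have hGc : ∀ i : Fin d, Continuous fun e => G e i := by
    intro i
    induction i using WellFoundedLT.induction with
    | ind i ih =>
      have : (fun e => G e i) = fun e => f i (fun j => G e j.1) (e i) := funext fun e => hG e i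
      rw [this]
      exact (hf i).comp ((continuous_pi fun j : ↥(Pa i) => ih j.1 (hPa i j.1 j.2)).prodMk
        (continuous_apply i))
  induction n with
  | zero =>
    intro _ ε hε
    exact ⟨fun i _ => 0, fun i => net_const 0, fun e _ g _ i hi => absurd hi (by omega)⟩
  | succ n ih =>
    intro hn ε hε
    let m : Fin d := ⟨n, hn⟩
    let F : (↥(Pa m) ⊕ Unit → ℝ) → ℝ := fun u => f m (fun j => u (Sum.inl j)) (u (Sum.inr ()))
    have hF : Continuous F := (hf m).comp
      (Continuous.prodMk (continuous_pi fun j => continuous_apply (Sum.inl j))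
        (continuous_apply (Sum.inr ())))
    let T : (Fin d → ℝ) → (↥(Pa m) ⊕ Unit → ℝ) :=
      fun e => Sum.elim (fun j => G e j.1) (fun _ => e m)
    have hT : Continuous T := by
      refine continuous_pi fun l => ?_
      rcases l with j | _
      · exact hGc j.1
      · exact continuous_apply m
    have hcube : IsCompact (Set.univ.pi fun _ : Fin d => Icc (0:ℝ) 1) :=
      isCompact_univ_pi fun _ => isCompact_Icc
    have hK : IsCompact (Metric.cthickening 1
      (T '' (Set.univ.pi fun _ : Fin d => Icc (0:ℝ) 1))) := (hcube.image hT).cthickening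
    have huc := hK.uniformContinuousOn_of_continuous hF.continuousOn
    rw [Metric.uniformContinuousOn_iff] at huc
    obtain ⟨δ, hδ, H⟩ := huc (ε / 2) (by positivity)
    obtain ⟨ψ, hψ, hψa⟩ := relu_universal _ hK F hF (ε / 2) (by positivity)
    obtain ⟨φ, hφ, hφa⟩ := ih (by omega) (min ε (min δ 1)) (by positivity)
    refine ⟨Function.update φ m ψ, fun i => ?_, fun e he g hg i hi => ?_⟩
    · rcases eq_or_ne i m with rfl | him
      · simpa using hψ
      · simpa [Function.update_of_ne him] using hφ i
    · have hclose := hφa e he g (fun i hi => by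
        have him : i ≠ m := fun h => by rw [h] at hi; exact lt_irrefl _ hi
        have := hg i (by omega)
        rwa [Function.update_of_ne him] at this)
      rcases Nat.lt_succ_iff_lt_or_eq.mp hi with hlt | heq
      · exact lt_of_lt_of_le (hclose i hlt) (min_le_left _ _)
      · obtain rfl : i = m := Fin.ext heq
        have hgm := hg m hi
        rw [Function.update_self] at hgm
        set u : ↥(Pa m) ⊕ Unit → ℝ := Sum.elim (fun j => g j.1) (fun _ => e m) with hu
        have hd : dist u (T e) < min δ 1 := by
          rw [dist_pi_lt_iff (by positivity)]
          rintro (j | _)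
          · have := hclose j.1 (hPa m j.1 j.2)
            have h2 := lt_of_lt_of_le this (min_le_right _ _)
            rw [dist_comm]
            exact h2
          · have : (0:ℝ) < min δ 1 := by positivity
            simpa [u, T] using this
        have hTe : T e ∈ T '' (Set.univ.pi fun _ : Fin d => Icc (0:ℝ) 1) := ⟨e, he, rfl⟩
        have huK := Metric.mem_cthickening_of_dist_le u (T e) 1 _ hTe
          (hd.le.trans (min_le_right _ _))
        have h1 := H u huK (T e) (Metric.self_subset_cthickening _ hTe)
          (lt_of_lt_of_le hd (min_le_left _ _))
        have h2 := hψa u huK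
        have h3 : G e m = F (T e) := hG e m
        rw [Real.dist_eq] at h1
        rw [hgm, h3]
        rw [abs_lt] at h1 h2 ⊢
        constructor <;> linarith

/-- Proposition 2 of the paper, with one-hidden-layer ReLU networks: the
recursive FCM generator built from continuous mechanisms `fᵢ` along a DAG with parent sets
`Pa i ⊆ {j < i}` can be approximated, uniformly over the noise cube `[0,1]^d`, by the
generator built from one-hidden-layer ReLU networks `f̂ᵢ : ℝ^{|Pa i|+1} → ℝ`. -/
theorem stmt6 (d : ℕ)
    (Pa : Fin d → Finset (Fin d)) (hPa : ∀ i, ∀ j ∈ Pa i, j < i)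
    (f : (i : Fin d) → (↥(Pa i) → ℝ) → ℝ → ℝ)
    (hf : ∀ i, Continuous fun q : (↥(Pa i) → ℝ) × ℝ => f i q.1 q.2)
    (G : (Fin d → ℝ) → Fin d → ℝ)
    (hG : ∀ (e : Fin d → ℝ) (i : Fin d), G e i = f i (fun j => G e j.1) (e i)) :
    ∀ ε : ℝ, 0 < ε →
      ∃ fhat : (i : Fin d) → (↥(Pa i) → ℝ) → ℝ → ℝ,
        (∀ i, IsOneHiddenLayerReLUNet
          (fun u : ↥(Pa i) ⊕ Unit → ℝ => fhat i (fun j => u (Sum.inl j)) (u (Sum.inr ())))) ∧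
        ∃ Ghat : (Fin d → ℝ) → Fin d → ℝ,
          (∀ (e : Fin d → ℝ) (i : Fin d), Ghat e i = fhat i (fun j => Ghat e j.1) (e i)) ∧
          ∀ e ∈ Set.univ.pi fun _ : Fin d => Icc (0:ℝ) 1, ‖G e - Ghat e‖ < ε := by
  intro ε hε
  obtain ⟨φ, hφ, hφa⟩ := gen_approx d Pa hPa f hf G hG d le_rfl ε hε
  have hex : ∀ e : Fin d → ℝ, ∃ g : Fin d → ℝ,
      ∀ i, g i = φ i (Sum.elim (fun j => g j.1) (fun _ => e i)) := by
    intro e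
    have wf : WellFounded (fun a b : Fin d => a < b) := wellFounded_lt
    exact ⟨wf.fix (fun i rec => φ i (Sum.elim (fun j => rec j.1 (hPa i j.1 j.2)) (fun _ => e i))),
      fun i => wf.fix_eq _ i⟩
  choose Ghat hGhat using hex
  refine ⟨fun i a t => φ i (Sum.elim a (fun _ => t)), fun i => ?_, Ghat, hGhat, fun e he => ?_⟩
  · have hcongr : (fun u : ↥(Pa i) ⊕ Unit → ℝ =>
        φ i (Sum.elim (fun j => u (Sum.inl j)) (fun _ => u (Sum.inr ())))) = φ i := by
      funext u
      congr 1
      funext l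
      rcases l with j | _ <;> rfl
    have hi := hφ i
    rw [← hcongr] at hi
    exact hi
  · rw [pi_norm_lt_iff hε]
    intro i
    exact hφa e he (Ghat e) (fun i _ => hGhat e i) i i.2
end
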